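/- Let r ≥ 2 and let (M_n)_{n ∈ ℕ} be a family of r×r real symmetric negative definite matrices such that (M_n) 1 1 = (M_n) 2 2 = -(n+2)/(n+1), (M_n) 1 2 = (M_n) 2 1 = 1/(n+1), all other entries of M_n are independent of n, and all off-diagonal entries of every M_n are nonnegative. Let c ∈ ℝ^r satisfy c i ≥ 0 for all i and c 1 = c 2 = 0, and set m = (M_0)⁻¹ c and m' = (M_n)⁻¹ c. Then det(M_n)·(m' 1 - m' 2) = det(M_0)·(m 1 - m 2). -/

import Mathlib

open Matrix

/-- A rank-one update of `A` by a multiple of `u uᵀ` does not change the product of the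
determinant with the pairing of `u` against the solution of the linear system. -/
theorem det_mul_dotProduct_inv_mulVec_of_rank_one_update {ι K : Type*} [Fintype ι]
    [DecidableEq ι] [Field K] (A : Matrix ι ι K) (u c : ι → K) (t : K)
    (hA : IsUnit A.det) (hB : IsUnit (A + vecMulVec (t • u) u).det) :
    (A + vecMulVec (t • u) u).det * (u ⬝ᵥ ((A + vecMulVec (t • u) u)⁻¹ *ᵥ c)) =
      A.det * (u ⬝ᵥ (A⁻¹ *ᵥ c)) := by
  set B := A + vecMulVec (t • u) u with hBdef
  set x := B⁻¹ *ᵥ c with hx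
  have hdet : B.det = A.det * (1 + t * (u ⬝ᵥ (A⁻¹ *ᵥ u))) := by
    rw [hBdef, vecMulVec_eq Unit, det_add_replicateCol_mul_replicateRow hA, det_unique (n := Unit)]
    simp [Matrix.mul_assoc, Matrix.mul_apply, dotProduct, mulVec, Finset.mul_sum]
  have hBx : A *ᵥ x + (t * (u ⬝ᵥ x)) • u = c := by
    have h : B *ᵥ x = c := by
      rw [hx, mulVec_mulVec, mul_nonsing_inv _ hB, one_mulVec]
    rw [hBdef, add_mulVec, vecMulVec_mulVec] at h
    rw [← h]
    ext i
    simp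
    ring
  have hAc : A⁻¹ *ᵥ c = x + (t * (u ⬝ᵥ x)) • (A⁻¹ *ᵥ u) := by
    rw [← hBx, mulVec_add, mulVec_mulVec, nonsing_inv_mul _ hA, one_mulVec, mulVec_smul]
  rw [hAc, hdet, dotProduct_add, dotProduct_smul, smul_eq_mul]
  ring

theorem isUnit_det_of_dotProduct_mulVec_neg {ι : Type*} [Fintype ι] [DecidableEq ι]
    {A : Matrix ι ι ℝ} (hA : ∀ x : ι → ℝ, x ≠ 0 → x ⬝ᵥ (A *ᵥ x) < 0) : IsUnit A.det := by
  rw [isUnit_iff_ne_zero]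
  intro h
  obtain ⟨x, hx, hAx⟩ := exists_mulVec_eq_zero_iff.mpr h
  simpa [hAx] using hA x hx

/-- **Lemma 1.10.** For the family `M_n` of intersection matrices arising from a
`(-2)`-insertion, with `m = M₀⁻¹ c` and `m' = M_n⁻¹ c`, one has
`det(M_n)·(m'₁ - m'₂) = det(M₀)·(m₁ - m₂)`. -/
theorem insertion_det_relation
    (r : ℕ) (hr : 2 ≤ r) (N : ℕ → Matrix (Fin r) (Fin r) ℝ)
    (hsymm : ∀ n : ℕ, (N n).IsSymm)
    (hnegdef : ∀ n : ℕ, ∀ x : Fin r → ℝ, x ≠ 0 → x ⬝ᵥ (N n *ᵥ x) < 0)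
    (h00 : ∀ n : ℕ, N n ⟨0, by omega⟩ ⟨0, by omega⟩ = -((n : ℝ) + 2) / ((n : ℝ) + 1))
    (h11 : ∀ n : ℕ, N n ⟨1, by omega⟩ ⟨1, by omega⟩ = -((n : ℝ) + 2) / ((n : ℝ) + 1))
    (h01 : ∀ n : ℕ, N n ⟨0, by omega⟩ ⟨1, by omega⟩ = 1 / ((n : ℝ) + 1))
    (h10 : ∀ n : ℕ, N n ⟨1, by omega⟩ ⟨0, by omega⟩ = 1 / ((n : ℝ) + 1))
    (hconst : ∀ n k : ℕ, ∀ i j : Fin r, ¬((i : ℕ) ≤ 1 ∧ (j : ℕ) ≤ 1) → N n i j = N k i j)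
    (hoffdiag : ∀ n : ℕ, ∀ i j : Fin r, i ≠ j → 0 ≤ N n i j)
    (c : Fin r → ℝ) (hc : ∀ i, 0 ≤ c i)
    (hc0 : c ⟨0, by omega⟩ = 0) (hc1 : c ⟨1, by omega⟩ = 0)
    (n : ℕ)
    (m : Fin r → ℝ) (hm : m = (N 0)⁻¹ *ᵥ c)
    (m' : Fin r → ℝ) (hm' : m' = (N n)⁻¹ *ᵥ c) :
    (N n).det * (m' ⟨0, by omega⟩ - m' ⟨1, by omega⟩) =
      (N 0).det * (m ⟨0, by omega⟩ - m ⟨1, by omega⟩) := by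
  let e₀ : Fin r := ⟨0, by omega⟩
  let e₁ : Fin r := ⟨1, by omega⟩
  have hne : e₀ ≠ e₁ := by simp [e₀, e₁]
  let u : Fin r → ℝ := Pi.single e₀ 1 - Pi.single e₁ 1
  have hu : ∀ x : Fin r → ℝ, u ⬝ᵥ x = x e₀ - x e₁ := by
    intro x
    simp [u, sub_dotProduct]
  have hn : (n : ℝ) + 1 ≠ 0 := by positivity
  have hu₀ : u e₀ = 1 := by simp [u, hne]
  have hu₁ : u e₁ = -1 := by simp [u, hne.symm]
  have hu_zero : ∀ i : Fin r, ¬ (i : ℕ) ≤ 1 → u i = 0 := by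
    intro i hi
    have hi₀ : i ≠ e₀ := by rintro rfl; simp [e₀] at hi
    have hi₁ : i ≠ e₁ := by rintro rfl; simp [e₁] at hi
    simp [u, hi₀, hi₁]
  have hle : ∀ i : Fin r, (i : ℕ) ≤ 1 → i = e₀ ∨ i = e₁ := by
    intro i hi
    simp only [e₀, e₁, Fin.ext_iff]
    omega
  have hN : N n = N 0 + vecMulVec (((n : ℝ) / (n + 1)) • u) u := by
    ext i j
    rw [Matrix.add_apply, vecMulVec_apply, Pi.smul_apply, smul_eq_mul]
    by_cases hij : (i : ℕ) ≤ 1 ∧ (j : ℕ) ≤ 1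
    · obtain ⟨hi, hj⟩ := hij
      rcases hle i hi with rfl | rfl <;> rcases hle j hj with rfl | rfl <;>
        simp only [hu₀, hu₁] <;> simp only [e₀, e₁, h00, h01, h10, h11] <;>
        field_simp <;> push_cast <;> ring
    · rw [hconst n 0 i j hij]
      rcases not_and_or.mp hij with h | h <;> simp [hu_zero _ h]
  have hunit := fun k => isUnit_det_of_dotProduct_mulVec_neg (hnegdef k)
  have key := det_mul_dotProduct_inv_mulVec_of_rank_one_update (N 0) u c ((n : ℝ) / (n + 1))
    (hunit 0) (hN ▸ hunit n)
  rw [← hN, hu, hu, ← hm, ← hm'] at key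
  exact key
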